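/- In the difference field extension setting, there exists a quasi-polynomial Φ of degree at most m such that Φ(r) = trdeg_K L_r for all sufficiently large r ∈ ℕ. -/

import Mathlib

/-!
Rank the terms `τ^k η_i` by weighted order, breaking ties in a way compatible with translations of
the exponents. Greedily discarding each term that is algebraic over `K` and the lower ones leaves a
transcendence basis of every `L_r`. Applying `τ^d` to an algebraic relation gives another one, so
for each `i` the exponents that survive form a lower set `D` of `ℕ^m`, and it remains to show that
the number `H_D(r)` of points of `D` of weighted order at most `r` is eventually quasi-polynomial.

Splitting off the points with `k₁ = 0` gives `H_D(r + w₁) = H_{D - e₁}(r) + H_E(r + w₁)` for a lower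
set `E` of `ℕ^(m-1)`. By Dickson's lemma lower sets satisfy the descending chain condition, so one
may assume the claim for `D - e₁` unless `D - e₁ = D`, and in that case the recursion says that the
`w₁`-difference of `H_D` is eventually quasi-polynomial of degree less than `m`.
-/

/-- The weighted order of `k ∈ ℕ^m`: `ord_w k = w₁k₁ + ⋯ + w_m k_m`. -/
def ordw {m : ℕ} (w : Fin m → ℕ) (k : Fin m → ℕ) : ℕ := ∑ i, w i * k i

/-- `τ^k = α₁^{k₁} ∘ ⋯ ∘ α_m^{k_m}` as a map `L → L`. -/
noncomputable def tauApp {L : Type*} [Field L] {m : ℕ}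
    (α : Fin m → (L →+* L)) (k : Fin m → ℕ) : L → L :=
  (List.ofFn fun i => (⇑(α i))^[k i]).foldr (· ∘ ·) id

/-- `L_r`: the subfield of `L` generated by `K` and all `τ^k η_i` with `ord_w k ≤ r`. -/
noncomputable def diffSubfield {L : Type*} [Field L] {m n : ℕ}
    (K : Subfield L) (α : Fin m → (L →+* L)) (w : Fin m → ℕ)
    (η : Fin n → L) (r : ℕ) : Subfield L :=
  Subfield.closure ((K : Set L) ∪
    {x | ∃ (k : Fin m → ℕ) (i : Fin n), ordw w k ≤ r ∧ x = tauApp α k (η i)})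

/-- The transcendence degree over `K` of a subfield `S` of `L` containing `K`
(as a natural number): the largest `d` such that `S` contains `d` elements
algebraically independent over `K`. -/
noncomputable def trdegNat {L : Type*} [Field L] (K S : Subfield L) : ℕ :=
  sSup {d : ℕ | ∃ b : Fin d → L, (∀ i, b i ∈ S) ∧ AlgebraicIndependent K b}

section QuasiPolynomial

open Filter fwdDiff Polynomial

variable {G : Type*} [AddCommGroup G] {q d : ℕ}

/-- The sequences `f : ℕ → G` with `Δ_q^d f = 0` from some index on. Over a field of characteristic
zero these are the sequences that eventually agree with a quasi-polynomial of period `q` and degree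
less than `d`; the encoding by iterated differences needs no witnesses and makes them a group. -/
def eventuallyQuasiPolynomial (G : Type*) [AddCommGroup G] (q d : ℕ) : AddSubgroup (ℕ → G) where
  carrier := {f | Δ_[q] ^[d] f =ᶠ[atTop] 0}
  zero_mem' := .of_eq <| by simpa using fwdDiff_iter_const_smul q (0 : ℕ) (0 : ℕ → G) d
  add_mem' {f g} hf hg := by
    simpa only [Set.mem_ofPred_eq, fwdDiff_iter_add, add_zero] using EventuallyEq.add hf hg
  neg_mem' {f} hf := by
    have hneg : Δ_[q] ^[d] (-f) = -Δ_[q] ^[d] f := by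
      simpa using fwdDiff_iter_const_smul q (-1 : ℤ) f d
    simpa only [Set.mem_ofPred_eq, hneg, neg_zero] using EventuallyEq.neg hf

theorem mem_eventuallyQuasiPolynomial_succ {f : ℕ → G} :
    f ∈ eventuallyQuasiPolynomial G q (d + 1) ↔ Δ_[q] f ∈ eventuallyQuasiPolynomial G q d :=
  Iff.rfl

theorem comp_add_mem_eventuallyQuasiPolynomial_iff (a : ℕ) {f : ℕ → G} :
    (fun r ↦ f (r + a)) ∈ eventuallyQuasiPolynomial G q d ↔
      f ∈ eventuallyQuasiPolynomial G q d := by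
  change (∀ᶠ r in atTop, Δ_[q] ^[d] (fun r ↦ f (r + a)) r = 0) ↔ ∀ᶠ r in atTop, Δ_[q] ^[d] f r = 0
  simp only [fwdDiff_iter_comp_add]
  conv_rhs => rw [← map_add_atTop_eq_nat a, eventually_map]

theorem eventuallyQuasiPolynomial_mono : Monotone (eventuallyQuasiPolynomial G q) :=
  monotone_nat_of_le_succ fun d f hf ↦ by
    have hshift := (comp_add_mem_eventuallyQuasiPolynomial_iff q).2 hf
    exact mem_eventuallyQuasiPolynomial_succ.2 (sub_mem hshift hf)

theorem fwdDiff_mul_eq_sum (f : ℕ → G) (w c : ℕ) :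
    Δ_[w * c] f = ∑ i ∈ Finset.range c, fun r ↦ Δ_[w] f (r + w * i) := by
  ext r
  simpa [fwdDiff, mul_add, add_assoc] using
    (Finset.sum_range_sub (fun i ↦ f (r + w * i)) c).symm

theorem mem_eventuallyQuasiPolynomial_of_fwdDiff {w : ℕ} (hw : w ∣ q) {f : ℕ → G}
    (hf : Δ_[w] f ∈ eventuallyQuasiPolynomial G q d) :
    f ∈ eventuallyQuasiPolynomial G q (d + 1) := by
  obtain ⟨c, rfl⟩ := hw
  rw [mem_eventuallyQuasiPolynomial_succ, fwdDiff_mul_eq_sum]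
  exact sum_mem fun i _ ↦ (comp_add_mem_eventuallyQuasiPolynomial_iff (w * i)).2 hf

theorem fwdDiff_iter_one_comp_add_mul (f : ℕ → G) (a q k : ℕ) :
    Δ_[1] ^[k] (fun t ↦ f (a + t * q)) = fun t ↦ Δ_[q] ^[k] f (a + t * q) := by
  induction k with
  | zero => rfl
  | succ k ih =>
    ext t
    simp only [Function.iterate_succ_apply', ih, fwdDiff, add_mul, one_mul, add_assoc]

variable {F : Type*} [Field F] [CharZero F]

/-- Newton's forward difference formula provides the polynomial. -/
theorem exists_polynomial_of_fwdDiff_iter_eq_zero {f : ℕ → F} (hf : Δ_[1] ^[d + 1] f = 0) :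
    ∃ p : F[X], p.natDegree ≤ d ∧ ∀ t : ℕ, f t = p.eval (t : F) := by
  have hvanish (k : ℕ) (hk : d + 1 ≤ k) : Δ_[1] ^[k] f = 0 := by
    obtain ⟨j, rfl⟩ := Nat.exists_eq_add_of_le' hk
    rw [Function.iterate_add_apply, hf]
    simpa using fwdDiff_iter_const_smul 1 (0 : ℕ) (0 : ℕ → F) j
  refine ⟨∑ k ∈ Finset.range (d + 1), C (Δ_[1] ^[k] f 0 / k.factorial) * descPochhammer F k,
    natDegree_sum_le_of_forall_le _ _ fun k hk ↦ ?_, fun t ↦ ?_⟩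
  · exact (natDegree_C_mul_le _ _).trans
      ((descPochhammer_natDegree F k).trans_le (Nat.le_of_lt_succ (Finset.mem_range.1 hk)))
  · let u (k : ℕ) : F := t.choose k • Δ_[1] ^[k] f 0
    calc f t = ∑ k ∈ Finset.range (t + 1), u k := by
          simpa [u] using shift_eq_sum_fwdDiff_iter 1 f t 0
      _ = ∑ k ∈ Finset.range (max (t + 1) (d + 1)), u k :=
          (Finset.eventually_constant_sum
            (fun k hk ↦ by simp [u, Nat.choose_eq_zero_of_lt hk]) (le_max_left _ _)).symm
      _ = ∑ k ∈ Finset.range (d + 1), u k :=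
          Finset.eventually_constant_sum
            (fun k hk ↦ by simp [u, hvanish k hk]) (le_max_right _ _)
      _ = _ := by
          rw [eval_finsetSum]
          refine Finset.sum_congr rfl fun k _ ↦ ?_
          simp only [u, eval_C_mul, nsmul_eq_mul, Nat.cast_choose_eq_descPochhammer_div F t k]
          ring

theorem exists_polynomial_of_mem_eventuallyQuasiPolynomial (hq : 0 < q) {f : ℕ → F}
    (hf : f ∈ eventuallyQuasiPolynomial F q (d + 1)) :
    ∃ g : Fin q → F[X], (∀ i, (g i).natDegree ≤ d) ∧
      ∃ N : ℕ, ∀ r : ℕ, N ≤ r → f r = (g ⟨r % q, Nat.mod_lt r hq⟩).eval (r : F) := by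
  obtain ⟨N, hN⟩ := eventually_atTop.1 hf
  have hprogression (i : Fin q) : Δ_[1] ^[d + 1] (fun t ↦ f (i + N * q + t * q)) = 0 := by
    ext t
    have hle : N ≤ i + N * q + t * q := by nlinarith [Nat.zero_le (i : ℕ), Nat.zero_le (t * q)]
    exact (congrFun (fwdDiff_iter_one_comp_add_mul f (i + N * q) q (d + 1)) t).trans (hN _ hle)
  choose p hdeg hp using fun i ↦ exists_polynomial_of_fwdDiff_iter_eq_zero (hprogression i)
  let line (i : Fin q) : F[X] := C (q : F)⁻¹ * X + C (-((q : F)⁻¹ * (i + N * q : ℕ)))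
  refine ⟨fun i ↦ (p i).comp (line i), fun i ↦ ?_, N * q, fun r hr ↦ ?_⟩
  · calc ((p i).comp (line i)).natDegree ≤ (p i).natDegree * (line i).natDegree := natDegree_comp_le
      _ ≤ d * 1 := Nat.mul_le_mul (hdeg i) natDegree_linear_le
      _ = d := mul_one d
  · obtain ⟨t, ht⟩ := Nat.exists_eq_add_of_le ((Nat.le_div_iff_mul_le hq).2 hr)
    have hr_eq : r = r % q + N * q + t * q := by
      rw [add_assoc, ← add_mul, ← ht, mul_comm, Nat.mod_add_div]
    have hline : (line ⟨r % q, Nat.mod_lt r hq⟩).eval (r : F) = t := by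
      have hq0 : (q : F) ≠ 0 := Nat.cast_ne_zero.2 hq.ne'
      have hr_cast : (r : F) = (r % q + N * q : ℕ) + t * q := by exact_mod_cast hr_eq
      simp only [line, eval_add, eval_mul, eval_C, eval_X]
      rw [hr_cast]
      field_simp
      ring
    rw [eval_comp, hline, ← hp]
    exact congrArg f hr_eq

end QuasiPolynomial

section LowerSet

theorem wellFoundedLT_lowerSet (α : Type*) [Preorder α] [WellQuasiOrderedLE α] :
    WellFoundedLT (LowerSet α) := by
  refine ⟨wellFounded_iff_isEmpty_descending_chain.2 ⟨fun ⟨D, hD⟩ ↦ ?_⟩⟩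
  have hanti : Antitone D := antitone_nat_of_succ_le fun n ↦ (hD n).le
  choose x hx hx' using fun n ↦ Set.exists_of_ssubset (LowerSet.coe_ssubset_coe.2 (hD n))
  obtain ⟨i, j, hij, hle⟩ := wellQuasiOrdered_le x
  exact hx' i ((D (i + 1)).lower hle (hanti hij (hx j)))

theorem ordw_add {m : ℕ} (w k l : Fin m → ℕ) : ordw w (k + l) = ordw w k + ordw w l := by
  simp [ordw, mul_add, Finset.sum_add_distrib]

theorem ordw_single {m : ℕ} (w : Fin m → ℕ) (i : Fin m) (a : ℕ) :
    ordw w (Pi.single i a) = w i * a := by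
  simp [ordw, Pi.single_apply]

theorem ordw_cons {m : ℕ} (w : Fin (m + 1) → ℕ) (a : ℕ) (k : Fin m → ℕ) :
    ordw w (Fin.cons a k) = w 0 * a + ordw (Fin.tail w) k := by
  simp [ordw, Fin.sum_univ_succ, Fin.tail]

theorem finite_setOf_ordw_le {m : ℕ} {w : Fin m → ℕ} (hw : ∀ i, 0 < w i) (r : ℕ) :
    {k | ordw w k ≤ r}.Finite := by
  refine (Set.finite_Iic fun _ ↦ r).subset fun k hk i ↦ ?_
  calc k i ≤ w i * k i := Nat.le_mul_of_pos_left _ (hw i)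
    _ ≤ ordw w k := Finset.single_le_sum (f := fun i ↦ w i * k i) (by simp) (Finset.mem_univ i)
    _ ≤ r := hk

/-- The number of points of `D` of weighted order at most `r`, the weighted Hilbert function of the
monomials with exponent in `D`. It has the junk value `0` if there are infinitely many such points,
which does not happen for positive weights. -/
noncomputable def weightedCount {m : ℕ} (w : Fin m → ℕ) (D : Set (Fin m → ℕ)) (r : ℕ) : ℕ :=
  {k ∈ D | ordw w k ≤ r}.ncard

theorem ncard_eq_ncard_preimage_add_single_add_ncard_preimage_cons {m : ℕ}
    {A : Set (Fin (m + 1) → ℕ)} (hA : A.Finite) :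
    A.ncard = {k : Fin (m + 1) → ℕ | k + Pi.single 0 1 ∈ A}.ncard +
      {k : Fin m → ℕ | Fin.cons 0 k ∈ A}.ncard := by
  have hpos : A ∩ {k | k 0 = 0}ᶜ =
      (· + Pi.single 0 1) '' {k : Fin (m + 1) → ℕ | k + Pi.single 0 1 ∈ A} := by
    refine .trans ?_ Set.image_preimage_eq_inter_range.symm
    congr 1
    ext k
    refine ⟨fun hk ↦ ⟨k - Pi.single 0 1, tsub_add_cancel_of_le ?_⟩, ?_⟩
    · exact Fin.cases (by simpa using Nat.one_le_iff_ne_zero.2 hk) (by simp)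
    · rintro ⟨l, rfl⟩
      simp
  have hzero : A ∩ {k | k 0 = 0} =
      Fin.cons (α := fun _ ↦ ℕ) 0 '' {k | Fin.cons 0 k ∈ A} := by
    refine .trans ?_ Set.image_preimage_eq_inter_range.symm
    congr 1
    ext k
    refine ⟨fun hk ↦ ⟨Fin.tail k, ?_⟩, ?_⟩
    · rw [← show k 0 = 0 from hk, Fin.cons_self_tail]
    · rintro ⟨l, rfl⟩
      simp
  rw [← Set.ncard_inter_add_ncard_sdiff_eq_ncard A {k | k 0 = 0} hA, Set.sdiff_eq, hpos, hzero,
    Set.ncard_image_of_injective _ (add_left_injective _),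
    Set.ncard_image_of_injective _ (Fin.cons_right_injective _), add_comm]

theorem weightedCount_add_weight_zero {m : ℕ} {w : Fin (m + 1) → ℕ} (hw : ∀ i, 0 < w i)
    (D : Set (Fin (m + 1) → ℕ)) (r : ℕ) :
    weightedCount w D (r + w 0) = weightedCount w {k | k + Pi.single 0 1 ∈ D} r +
      weightedCount (Fin.tail w) {k | Fin.cons 0 k ∈ D} (r + w 0) := by
  have hfin : {k ∈ D | ordw w k ≤ r + w 0}.Finite :=
    (finite_setOf_ordw_le hw _).subset fun _ hk ↦ hk.2
  rw [weightedCount, ncard_eq_ncard_preimage_add_single_add_ncard_preimage_cons hfin]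
  simp [weightedCount, ordw_add, ordw_single, ordw_cons]

theorem weightedCount_mem_eventuallyQuasiPolynomial {m q : ℕ} {w : Fin m → ℕ} (hw : ∀ i, 0 < w i)
    (hwq : ∀ i, w i ∣ q) (D : LowerSet (Fin m → ℕ)) :
    (fun r ↦ (weightedCount w D r : ℚ)) ∈ eventuallyQuasiPolynomial ℚ q (m + 1) := by
  induction m with
  | zero =>
    refine mem_eventuallyQuasiPolynomial_succ.2 ?_
    convert zero_mem (eventuallyQuasiPolynomial ℚ q 0)
    ext r
    simp [fwdDiff, weightedCount, ordw]
  | succ m ih =>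
    have hwf := wellFoundedLT_lowerSet (Fin (m + 1) → ℕ)
    induction D using WellFoundedLT.induction with
    | ind D ihD =>
    let slice : LowerSet (Fin m → ℕ) := ⟨{k | Fin.cons 0 k ∈ D},
      D.lower.preimage fun _ _ h ↦ Fin.cons_le_cons.2 ⟨le_rfl, h⟩⟩
    let shift : LowerSet (Fin (m + 1) → ℕ) := ⟨{k | k + Pi.single 0 1 ∈ D},
      D.lower.preimage fun _ _ h ↦ add_le_add_left h _⟩
    have hrec (r : ℕ) : (weightedCount w D (r + w 0) : ℚ) =
        weightedCount w shift r + weightedCount (Fin.tail w) slice (r + w 0) :=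
      mod_cast weightedCount_add_weight_zero hw D r
    have hslice := (comp_add_mem_eventuallyQuasiPolynomial_iff (w 0)).2
      (ih (w := Fin.tail w) (fun i ↦ hw i.succ) (fun i ↦ hwq i.succ) slice)
    have hshift_le : shift ≤ D := fun k hk ↦ D.lower le_self_add hk
    rcases hshift_le.eq_or_lt with heq | hlt
    · refine mem_eventuallyQuasiPolynomial_of_fwdDiff (hwq 0) ?_
      convert hslice using 2 with r
      rw [fwdDiff, hrec, heq, add_sub_cancel_left]
    · refine (comp_add_mem_eventuallyQuasiPolynomial_iff (w 0)).1 ?_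
      simp only [hrec]
      exact add_mem (ihD shift hlt) (eventuallyQuasiPolynomial_mono (Nat.le_succ _) hslice)

end LowerSet

section Matroid

theorem eRk_image_eq_encard_notMem_closure {α ι κ : Type*} [LinearOrder κ] (M : Matroid α)
    {x : ι → α} (hx : ∀ i, x i ∈ M.E) {rank : ι → κ} (hrank : Function.Injective rank)
    (s : Finset ι) (hs : ∀ i ∈ s, ∀ j, rank j < rank i → j ∈ s) :
    M.eRk (x '' s) = {i ∈ (s : Set ι) | x i ∉ M.closure (x '' {j | rank j < rank i})}.encard := by
  classical
  let U : Set ι := {i | x i ∉ M.closure (x '' {j | rank j < rank i})}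
  induction s using Finset.induction_on_max_value rank with
  | empty => simp
  | insert a s ha hmax ih =>
    have hlt (i : ι) (hi : i ∈ s) : rank i < rank a :=
      (hmax i hi).lt_of_ne (hrank.ne (ne_of_mem_of_not_mem hi ha))
    have hbelow : {j | rank j < rank a} = s := Set.ext fun j ↦
      ⟨fun hj ↦ Finset.mem_of_mem_insert_of_ne (hs a (Finset.mem_insert_self a s) j hj)
        fun h ↦ hj.ne (congrArg rank h), hlt j⟩
    have hinit (i : ι) (hi : i ∈ s) (j : ι) (hj : rank j < rank i) : j ∈ s :=
      hbelow.subset (hj.trans (hlt i hi))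
    have ih : M.eRk (x '' s) = ((s : Set ι) ∩ U).encard := ih hinit
    change M.eRk (x '' (insert a s : Finset ι)) = (((insert a s : Finset ι) : Set ι) ∩ U).encard
    rw [Finset.coe_insert, Set.image_insert_eq]
    by_cases hmem : x a ∈ M.closure (x '' s)
    · have haU : a ∉ U := fun h ↦ h (hbelow ▸ hmem)
      rw [Set.insert_inter_of_notMem haU, ← ih, ← M.eRk_closure_eq,
        M.closure_insert_eq_of_mem_closure hmem, M.eRk_closure_eq]
    · have haU : a ∈ U := fun h ↦ hmem (hbelow ▸ h)
      rw [Set.insert_inter_of_mem haU, Set.encard_insert_of_notMem fun h ↦ ha h.1, ← ih,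
        M.eRk_insert_eq_add_one ⟨hx a, hmem⟩]

end Matroid

section Algebra

theorem map_mem_matroid_closure {R S A B : Type*} [CommRing R] [CommRing S]
    [CommRing A] [IsDomain A] [CommRing B] [IsDomain B]
    [Algebra R A] [Algebra S B] [FaithfulSMul R A] [FaithfulSMul S B]
    {f : R →+* S} {σ : A →+* B} (hσ : Function.Injective σ)
    (hf : σ.comp (algebraMap R A) = (algebraMap S B).comp f) {X : Set A} {x : A}
    (hx : x ∈ (AlgebraicIndependent.matroid R A).closure X) :
    σ x ∈ (AlgebraicIndependent.matroid S B).closure (σ '' X) := by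
  rw [AlgebraicIndependent.matroid_closure_eq, SetLike.mem_coe,
    Subalgebra.mem_algebraicClosure] at hx ⊢
  have hmaps : ∀ y ∈ Algebra.adjoin R X, σ y ∈ Algebra.adjoin S (σ '' X) := fun y hy ↦ by
    induction hy using Algebra.adjoin_induction with
    | mem y hy => exact Algebra.subset_adjoin (Set.mem_image_of_mem σ hy)
    | algebraMap c =>
      rw [← RingHom.comp_apply, hf]
      exact Subalgebra.algebraMap_mem _ (f c)
    | add a b _ _ ha hb => exact map_add σ a b ▸ add_mem ha hb
    | mul a b _ _ ha hb => exact map_mul σ a b ▸ mul_mem ha hb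
  exact hx.ringHom_of_comp_eq (σ.restrict (Algebra.adjoin R X) (Algebra.adjoin S (σ '' X)) hmaps) σ
    (fun a b hab ↦ Subtype.ext (hσ (congrArg Subtype.val hab))) rfl

variable {L : Type*} [Field L] (K : Subfield L)

theorem subfieldClosure_subset_matroid_closure (G : Set L) :
    (Subfield.closure (K ∪ G) : Set L) ⊆ (AlgebraicIndependent.matroid K L).closure G := by
  rw [AlgebraicIndependent.matroid_closure_eq]
  let E : Subfield L :=
    { (Subalgebra.algebraicClosure (Algebra.adjoin K G) L).toSubring with
      inv_mem' := fun _ hx ↦ IsAlgebraic.inv hx }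
  change Subfield.closure (K ∪ G) ≤ E
  refine Subfield.closure_le.2 (Set.union_subset (fun c hc ↦ ?_) fun x hx ↦ ?_)
  · exact Subalgebra.algebraMap_mem _ (algebraMap K (Algebra.adjoin K G) ⟨c, hc⟩)
  · exact Subalgebra.algebraMap_mem _ (⟨x, Algebra.subset_adjoin hx⟩ : Algebra.adjoin K G)

theorem eRk_subfieldClosure (G : Set L) :
    (AlgebraicIndependent.matroid K L).eRk (Subfield.closure (K ∪ G) : Set L) =
      (AlgebraicIndependent.matroid K L).eRk G := by
  refine le_antisymm ?_ (Matroid.eRk_mono _ (Set.subset_union_right.trans Subfield.subset_closure))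
  rw [← Matroid.eRk_closure_eq _ G]
  exact Matroid.eRk_mono _ (subfieldClosure_subset_matroid_closure K G)

variable {K}

theorem trdegNat_eq_of_eRk_eq {S : Subfield L} {d : ℕ}
    (hd : (AlgebraicIndependent.matroid K L).eRk S = d) : trdegNat K S = d := by
  refine IsGreatest.csSup_eq ⟨?_, ?_⟩
  · obtain ⟨I, hIS, hindep, hcard⟩ := Matroid.le_eRk_iff.1 hd.ge
    have hI : I.Finite := Set.finite_of_encard_eq_coe hcard
    have hncard : Nat.card I = d := by
      rw [Nat.card_coe_set_eq, ← ENat.natCast_inj, hI.cast_ncard_eq, hcard]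
    have : Finite I := hI
    let e : Fin d ≃ I := (Finite.equivFinOfCardEq hncard).symm
    exact ⟨fun i ↦ e i, fun i ↦ hIS (e i).2,
      (AlgebraicIndependent.matroid_indep_iff.1 hindep).comp e e.injective⟩
  · rintro c ⟨b, hbS, hb⟩
    have hindep : (AlgebraicIndependent.matroid K L).Indep (Set.range b) :=
      AlgebraicIndependent.matroid_indep_iff.2 hb.to_subtype_range
    have hle := hindep.encard_le_eRk_of_subset (Set.range_subset_iff.2 hbS)
    rw [hd, ← Set.image_univ, hb.injective.encard_image, Set.encard_univ] at hle
    simpa using hle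

theorem prod_ofFn_pow_add {M : Type*} [Monoid M] {m : ℕ} {a : Fin m → M}
    (ha : ∀ i j, Commute (a i) (a j)) (k l : Fin m → ℕ) :
    (List.ofFn fun i ↦ a i ^ (k + l) i).prod =
      (List.ofFn fun i ↦ a i ^ k i).prod * (List.ofFn fun i ↦ a i ^ l i).prod := by
  induction m with
  | zero => simp
  | succ m ih =>
    have hcomm : Commute (a 0 ^ l 0) (List.ofFn fun i : Fin m ↦ a i.succ ^ k i.succ).prod :=
      Commute.list_prod_right _ _ <| by
        simpa [List.mem_ofFn] using fun i : Fin m ↦ (ha 0 i.succ).pow_pow (l 0) (k i.succ)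
    have htail := ih (fun i j ↦ ha i.succ j.succ) (Fin.tail k) (Fin.tail l)
    simp only [Fin.tail, Pi.add_apply] at htail
    simp only [List.ofFn_succ, List.prod_cons, Pi.add_apply, pow_add, mul_assoc] at htail ⊢
    rw [htail, hcomm.left_comm]

/-- The monomial `τ^k = α₁^{k₁} ⋯ α_m^{k_m}` as a ring endomorphism, so that the laws of the monoid
`L →+* L` apply to it; `tauApp` is its underlying function. -/
def tauHom {m : ℕ} (α : Fin m → (L →+* L)) (k : Fin m → ℕ) : L →+* L :=
  (List.ofFn fun i ↦ α i ^ k i).prod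

theorem coe_tauHom {m : ℕ} (α : Fin m → (L →+* L)) (k : Fin m → ℕ) :
    ⇑(tauHom α k) = tauApp α k := by
  induction m with
  | zero => rfl
  | succ m ih =>
    simpa [tauHom, tauApp, List.ofFn_succ] using
      congrArg ((α 0)^[k 0] ∘ ·) (ih (fun i ↦ α i.succ) fun i ↦ k i.succ)

theorem tauApp_tauApp {m : ℕ} {α : Fin m → (L →+* L)}
    (hα : ∀ i j, (α i).comp (α j) = (α j).comp (α i)) (k l : Fin m → ℕ) (x : L) :
    tauApp α k (tauApp α l x) = tauApp α (k + l) x := by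
  simp only [← coe_tauHom, tauHom, prod_ofFn_pow_add hα, RingHom.mul_def, RingHom.comp_apply]

theorem tauHom_mem {m : ℕ} {α : Fin m → (L →+* L)} (hK : ∀ i, ∀ x ∈ K, α i x ∈ K)
    (k : Fin m → ℕ) {x : L} (hx : x ∈ K) : tauHom α k x ∈ K := by
  suffices Set.MapsTo (tauHom α k) K K from this hx
  refine List.prod_induction (fun σ : L →+* L ↦ Set.MapsTo σ K K) ?_ ?_ ?_
  · exact fun σ τ hσ hτ ↦ hσ.comp hτ
  · exact Set.mapsTo_id _
  · simpa [List.mem_ofFn] using fun i ↦ Set.MapsTo.iterate (hK i) (k i)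

end Algebra

section Ranking

variable {m : ℕ} {κ : Type*}

/-- The place of the term `τ^k y_i`, encoded as `(k, i)`, in the ranking by weighted order, then
lexicographically by exponent, then by index. -/
def termRank (w : Fin m → ℕ) (u : (Fin m → ℕ) × κ) : ℕ ×ₗ Lex (Fin m → ℕ) ×ₗ κ :=
  toLex (ordw w u.1, toLex (toLex u.1, u.2))

theorem termRank_injective (w : Fin m → ℕ) : Function.Injective (termRank (κ := κ) w) :=
  fun _ _ h ↦ congrArg ofLex (congrArg Prod.snd (congrArg ofLex h))

variable [LinearOrder κ] {w : Fin m → ℕ} {u v : (Fin m → ℕ) × κ}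

theorem ordw_le_of_termRank_lt (h : termRank w u < termRank w v) : ordw w u.1 ≤ ordw w v.1 :=
  (Prod.Lex.lt_iff'.1 h).1

theorem termRank_add_lt_termRank_add (d : Fin m → ℕ) (h : termRank w u < termRank w v) :
    termRank w (d + u.1, u.2) < termRank w (d + v.1, v.2) := by
  simpa only [termRank, Prod.Lex.toLex_lt_toLex, ordw_add, toLex_add, add_lt_add_iff_left,
    add_right_inj] using h

end Ranking

section FreeExponents

variable {L : Type*} [Field L] {K : Subfield L} {m n : ℕ} {α : Fin m → (L →+* L)} {w : Fin m → ℕ}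

/-- The exponents `k` for which `τ^k η_i` is transcendental over `K` and the terms ranked below it,
so that over all `i` they index a transcendence basis. -/
def freeExponents (K : Subfield L) (α : Fin m → (L →+* L)) (w : Fin m → ℕ) (η : Fin n → L)
    (i : Fin n) : Set (Fin m → ℕ) :=
  {k | tauApp α k (η i) ∉ (AlgebraicIndependent.matroid K L).closure
    ((fun u ↦ tauApp α u.1 (η u.2)) '' {u | termRank w u < termRank w (k, i)})}

/-- Applying `τ^d` to an algebraic relation for `τ^k η_i` over lower terms yields one for
`τ^(d + k) η_i`, because the ranking is compatible with translations. -/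
theorem isLowerSet_freeExponents (hα : ∀ i j, (α i).comp (α j) = (α j).comp (α i))
    (hK : ∀ i, ∀ x ∈ K, α i x ∈ K) (η : Fin n → L) (i : Fin n) :
    IsLowerSet (freeExponents K α w η i) := by
  intro l k hkl hl hk
  obtain ⟨d, rfl⟩ := le_iff_exists_add'.1 hkl
  have hrelation := map_mem_matroid_closure (tauHom α d).injective
    (f := (tauHom α d).restrict K K fun _ hx ↦ tauHom_mem hK d hx) rfl hk
  rw [coe_tauHom, tauApp_tauApp hα] at hrelation
  refine hl (Matroid.closure_subset_closure _ ?_ hrelation)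
  rintro _ ⟨_, ⟨u, hu, rfl⟩, rfl⟩
  exact ⟨(d + u.1, u.2), termRank_add_lt_termRank_add d hu, (tauApp_tauApp hα d u.1 _).symm⟩

theorem ncard_eq_sum_ncard_fiber {β ι : Type*} [Fintype ι] {s : Set (β × ι)} (hs : s.Finite) :
    s.ncard = ∑ i, {b | (b, i) ∈ s}.ncard := by
  have hfiber (i : ι) : Finite {b | (b, i) ∈ s} :=
    hs.preimage (Prod.mk_left_injective i).injOn
  let e : s ≃ Σ i, {b | (b, i) ∈ s} :=
    { toFun u := ⟨u.1.2, u.1.1, u.2⟩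
      invFun u := ⟨(u.2.1, u.1), u.2.2⟩ }
  simp only [← Nat.card_coe_set_eq, Nat.card_congr e, Nat.card_sigma]

theorem trdegNat_diffSubfield (hw : ∀ i, 0 < w i) (η : Fin n → L) (r : ℕ) :
    trdegNat K (diffSubfield K α w η r) = ∑ i, weightedCount w (freeExponents K α w η i) r := by
  let M := AlgebraicIndependent.matroid K L
  let term (u : (Fin m → ℕ) × Fin n) : L := tauApp α u.1 (η u.2)
  have hfin : {u : (Fin m → ℕ) × Fin n | ordw w u.1 ≤ r}.Finite :=
    ((finite_setOf_ordw_le hw r).prod Set.finite_univ).subset fun u hu ↦ ⟨hu, Set.mem_univ _⟩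
  let free : Set ((Fin m → ℕ) × Fin n) := {u | ordw w u.1 ≤ r ∧ u.1 ∈ freeExponents K α w η u.2}
  have hgenerators : {x | ∃ (k : Fin m → ℕ) (i : Fin n), ordw w k ≤ r ∧ x = tauApp α k (η i)} =
      term '' hfin.toFinset := by
    ext x
    simp [term, eq_comm]
  have hrank : M.eRk (term '' hfin.toFinset) = free.encard := by
    rw [eRk_image_eq_encard_notMem_closure M (fun _ ↦ Set.mem_univ _) (termRank_injective w)
      hfin.toFinset fun u hu v hv ↦ by
        simpa using (ordw_le_of_termRank_lt hv).trans (by simpa using hu), hfin.coe_toFinset]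
    rfl
  have hfree : free.Finite := hfin.subset fun u hu ↦ hu.1
  have hcount : free.ncard = ∑ i, weightedCount w (freeExponents K α w η i) r := by
    rw [ncard_eq_sum_ncard_fiber hfree]
    simp only [free, weightedCount, and_comm, Set.mem_ofPred_eq]
  refine trdegNat_eq_of_eRk_eq ?_
  rw [diffSubfield, eRk_subfieldClosure, hgenerators, hrank, ← hcount, hfree.cast_ncard_eq]

end FreeExponents

theorem exists_difference_dimension_quasipolynomial_general
    {L : Type*} [Field L] (K : Subfield L) {m n : ℕ} (α : Fin m → (L →+* L))
    (hcomm : ∀ i j, (α i).comp (α j) = (α j).comp (α i))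
    (hK : ∀ i, ∀ x ∈ K, α i x ∈ K)
    (w : Fin m → ℕ) (η : Fin n → L) {q : ℕ} (hq : 0 < q) (hwq : ∀ i, w i ∣ q) :
    ∃ g : Fin q → Polynomial ℚ, (∀ i, (g i).natDegree ≤ m) ∧ ∃ N : ℕ, ∀ r : ℕ, N ≤ r →
      (trdegNat K (diffSubfield K α w η r) : ℚ) = (g ⟨r % q, Nat.mod_lt r hq⟩).eval (r : ℚ) := by
  have hw (i : Fin m) : 0 < w i := Nat.pos_of_dvd_of_pos (hwq i) hq
  refine exists_polynomial_of_mem_eventuallyQuasiPolynomial hq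
    (f := fun r ↦ (trdegNat K (diffSubfield K α w η r) : ℚ)) ?_
  have hsum : (fun r ↦ (trdegNat K (diffSubfield K α w η r) : ℚ)) =
      ∑ i, fun r ↦ (weightedCount w (freeExponents K α w η i) r : ℚ) := by
    ext r
    simp [trdegNat_diffSubfield hw]
  rw [hsum]
  exact sum_mem fun i _ ↦ weightedCount_mem_eventuallyQuasiPolynomial hw hwq
    ⟨_, isLowerSet_freeExponents hcomm hK η i⟩

/-- Existence of the difference dimension quasi-polynomial: in the difference field
extension setting there is a quasi-polynomial `Φ` of degree at most `m` with
`Φ(r) = trdeg_K L_r` for all sufficiently large `r`. -/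
theorem exists_difference_dimension_quasipolynomial
    {L : Type*} [Field L] [CharZero L] (K : Subfield L)
    (m n : ℕ) (hm : 0 < m) (α : Fin m → (L →+* L))
    (hcomm : ∀ i j, (α i).comp (α j) = (α j).comp (α i))
    (hinj : ∀ i, Function.Injective (α i))
    (hK : ∀ i, ∀ x ∈ K, α i x ∈ K)
    (w : Fin m → ℕ) (hw : ∀ i, 0 < w i)
    (η : Fin n → L)
    (hgen : Subfield.closure ((K : Set L) ∪
      {x | ∃ (k : Fin m → ℕ) (i : Fin n), x = tauApp α k (η i)}) = ⊤) :
    ∃ (q : ℕ) (hq : 0 < q) (g : Fin q → Polynomial ℚ),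
      (∀ i : Fin q, (g i).natDegree ≤ m) ∧
      ∃ N : ℕ, ∀ r : ℕ, N ≤ r →
        (trdegNat K (diffSubfield K α w η r) : ℚ)
          = (g ⟨r % q, Nat.mod_lt r hq⟩).eval (r : ℚ) :=
  ⟨∏ i, w i, Finset.prod_pos fun i _ ↦ hw i,
    exists_difference_dimension_quasipolynomial_general K α hcomm hK w η
      (Finset.prod_pos fun i _ ↦ hw i)
      fun i ↦ Finset.dvd_prod_of_mem w (Finset.mem_univ i)⟩
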